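/- A polynomial-like map g : U → V of degree d ≥ 2 has connected filled Julia set K(g) if K(g) contains all critical points of g. -/

import Mathlib

/-- The filled Julia set of a polynomial-like map `g : U → V`. -/
def polyLikeFilledJulia (g : ℂ → ℂ) (U : Set ℂ) : Set ℂ :=
  {z : ℂ | ∀ m : ℕ, g^[m] z ∈ U}

open Set Filter Topology Metric

noncomputable def mob (a z : ℂ) : ℂ := (z - a) / (1 - (starRingEnd ℂ) a * z)

lemma mob_den_ne {a z : ℂ} (ha : ‖a‖ < 1) (hz : ‖z‖ < 1) : 1 - (starRingEnd ℂ) a * z ≠ 0 := by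
  intro h
  have h1 : (starRingEnd ℂ) a * z = 1 := (sub_eq_zero.1 h).symm
  have h2 : ‖a‖ * ‖z‖ = 1 := by
    have := congrArg norm h1
    simpa using this
  nlinarith [norm_nonneg a, norm_nonneg z]

lemma mob_norm_lt {a z : ℂ} (ha : ‖a‖ < 1) (hz : ‖z‖ < 1) : ‖mob a z‖ < 1 := by
  have hd := mob_den_ne ha hz
  rw [mob, norm_div, div_lt_one (norm_pos_iff.2 hd)]
  apply lt_of_pow_lt_pow_left₀ 2 (norm_nonneg _)
  have h1 : ‖a‖^2 < 1 := by nlinarith [norm_nonneg a]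
  have h2 : ‖z‖^2 < 1 := by nlinarith [norm_nonneg z]
  rw [Complex.sq_norm, Complex.normSq_apply] at *
  simp only [Complex.sub_re, Complex.sub_im, Complex.mul_re, Complex.mul_im, Complex.conj_re,
    Complex.conj_im, Complex.one_re, Complex.one_im]
  rw [Complex.sq_norm, Complex.normSq_apply] at *
  simp only [Complex.sub_re, Complex.sub_im, Complex.mul_re, Complex.mul_im, Complex.conj_re,
    Complex.conj_im, Complex.one_re, Complex.one_im]
  nlinarith [mul_pos (sub_pos.2 h1) (sub_pos.2 h2)]

lemma mob_injOn {a : ℂ} (ha : ‖a‖ < 1) : InjOn (mob a) (ball 0 1) := by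
  intro z hz w hw h
  have hz' := mob_den_ne ha (mem_ball_zero_iff.1 hz)
  have hw' := mob_den_ne ha (mem_ball_zero_iff.1 hw)
  simp only [mob] at h
  rw [div_eq_div_iff hz' hw'] at h
  have h3 : (z - w) * (1 - (starRingEnd ℂ) a * a) = 0 := by linear_combination h
  have h4 : 1 - (starRingEnd ℂ) a * a ≠ 0 := mob_den_ne ha ha
  exact sub_eq_zero.1 ((mul_eq_zero.1 h3).resolve_right h4)

lemma mob_hasDerivAt {a z : ℂ} (ha : ‖a‖ < 1) (hz : ‖z‖ < 1) :
    HasDerivAt (mob a) ((1 - (starRingEnd ℂ) a * a) / (1 - (starRingEnd ℂ) a * z)^2) z := by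
  have hd := mob_den_ne ha hz
  have h1 : HasDerivAt (fun z : ℂ => z - a) 1 z := (hasDerivAt_id z).sub_const a
  have h2 : HasDerivAt (fun z : ℂ => 1 - (starRingEnd ℂ) a * z) (-((starRingEnd ℂ) a)) z := by
    simpa using ((hasDerivAt_id z).const_mul ((starRingEnd ℂ) a)).const_sub 1
  exact (h1.div h2 hd).congr_deriv (by congr 1; ring)

lemma rmt_tlu {U : Set ℂ} (hUo : IsOpen U) (F : ℕ → ℂ → ℂ)
    (hF : ∀ n, DifferentiableOn ℂ (F n) U) (hb : ∀ n, MapsTo (F n) U (ball 0 1)) 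
    (l : Filter ℕ) [l.NeBot] (f : ℂ → ℂ) (hf : ∀ z ∈ U, Tendsto (fun n => F n z) l (𝓝 (f z))) :
    TendstoLocallyUniformlyOn F f l U := by
  rw [Metric.tendstoLocallyUniformlyOn_iff]
  intro ε hε z hz
  obtain ⟨R, hR, hRU⟩ := Metric.isOpen_iff.1 hUo z hz
  have hlip : ∀ n, ∀ w ∈ ball z R, dist (F n w) (F n z) ≤ 2 / R * dist w z := by
    intro n w hw
    refine Complex.dist_le_div_mul_dist_of_mapsTo_ball ((hF n).mono hRU) ?_ hw
    intro y hy
    have h1 := mem_ball_zero_iff.1 (hb n (hRU hy))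
    have h2 := mem_ball_zero_iff.1 (hb n hz)
    rw [mem_closedBall, dist_eq_norm]
    linarith [norm_sub_le (F n y) (F n z)]
  have hlipf : ∀ w ∈ ball z R, dist (f w) (f z) ≤ 2 / R * dist w z := by
    intro w hw
    exact le_of_tendsto ((hf w (hRU hw)).dist (hf z hz)) (Eventually.of_forall fun n => hlip n w hw)
  refine ⟨ball z (min R (ε * R / 8)), mem_nhdsWithin_of_mem_nhds (ball_mem_nhds _ (by positivity)), ?_⟩
  have := (Metric.tendsto_nhds.1 (hf z hz)) (ε/4) (by positivity)
  filter_upwards [this] with n hn w hw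
  have hwR : w ∈ ball z R := ball_subset_ball (min_le_left _ _) hw
  have hwd : dist w z < ε * R / 8 := lt_of_lt_of_le hw (min_le_right _ _)
  have h3 : 2 / R * dist w z ≤ ε / 4 := by
    calc 2 / R * dist w z ≤ 2 / R * (ε * R / 8) := by gcongr
      _ = ε / 4 := by field_simp; norm_num
  have h1 := hlip n w hwR
  have h2 := hlipf w hwR
  calc dist (f w) (F n w) ≤ dist (f w) (f z) + dist (f z) (F n z) + dist (F n z) (F n w) :=
        dist_triangle4 _ _ _ _
    _ < ε := by rw [dist_comm (f z), dist_comm (F n z) (F n w)]; linarith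

lemma rmt_hurwitz_aux {U : Set ℂ} (hUo : IsOpen U) (F : ℕ → ℂ → ℂ)
    (hF : ∀ n, DifferentiableOn ℂ (F n) U) (hinj : ∀ n, InjOn (F n) U) 
    (l : Filter ℕ) [l.NeBot] (f : ℂ → ℂ) (hf : TendstoLocallyUniformlyOn F f l U)
    (a : ℂ) (ha : a ∈ U) (hne : ∀ᶠ z in 𝓝[≠] a, f z ≠ f a) (r₀ : ℝ) (hr₀ : 0 < r₀) :
    ∀ᶠ n in l, ∃ z ∈ closedBall a r₀, z ∈ U ∧ F n z = f a := by
  obtain ⟨R, hR, hRU⟩ := Metric.isOpen_iff.1 hUo a ha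
  rw [eventually_nhdsWithin_iff, Metric.eventually_nhds_iff] at hne
  obtain ⟨R', hR', hne⟩ := hne
  set r := min r₀ (min (R/2) (R'/2)) with hr
  have hr0 : 0 < r := by positivity
  have hrR : r < R := lt_of_le_of_lt ((min_le_right _ _).trans (min_le_left _ _)) (by linarith)
  have hrR' : r < R' := lt_of_le_of_lt ((min_le_right _ _).trans (min_le_right _ _)) (by linarith)
  have hcU : closedBall a r ⊆ U := (closedBall_subset_ball hrR).trans hRU
  have hfc : ContinuousOn f U := hf.continuousOn (Eventually.frequently (Eventually.of_forall fun n => (hF n).continuousOn))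
  obtain ⟨x, hx, hmin⟩ := (isCompact_sphere a r).exists_isMinOn (NormedSpace.sphere_nonempty.2 hr0.le)
    (((hfc.mono (sphere_subset_closedBall.trans hcU)).sub continuousOn_const).norm (f := fun z => f z - f a))
  set ε := ‖f x - f a‖ with hε
  have hεpos : 0 < ε := by
    rw [hε, norm_pos_iff, sub_ne_zero]
    apply hne
    · rw [mem_sphere.1 hx]; exact hrR'
    · rintro rfl
      simp at hx; linarith
  have hu := (tendstoLocallyUniformlyOn_iff_forall_isCompact hUo).1 hf _ hcU (isCompact_closedBall a r)
  rw [Metric.tendstoUniformlyOn_iff] at hu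
  filter_upwards [hu (ε/8) (by positivity)] with n hn
  have key := DiffContOnCl.ball_subset_image_closedBall (f := F n) (z₀ := a) (r := r) (ε := ε/2) ?_ hr0 ?_ ?_
  · have : f a ∈ ball (F n a) (ε/2/2) := by
      rw [mem_ball]
      have := hn a (mem_closedBall_self hr0.le)
      linarith
    obtain ⟨z, hz, hzz⟩ := key this
    exact ⟨z, closedBall_subset_closedBall (min_le_left _ _) hz, hcU hz, hzz⟩
  · apply DifferentiableOn.diffContOnCl
    rw [closure_ball _ hr0.ne']
    exact (hF n).mono hcU
  · intro z hz
    have h1 := hn z (sphere_subset_closedBall hz)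
    have h2 := hn a (mem_closedBall_self hr0.le)
    have h3 : ε ≤ ‖f z - f a‖ := hmin hz
    rw [← dist_eq_norm] at h3 ⊢
    have := dist_triangle4 (f z) (F n z) (F n a) (f a)
    rw [dist_comm (F n a)] at this
    linarith
  · have hev : ∀ᶠ z in 𝓝[≠] a, F n z ≠ F n a := by
      rw [eventually_nhdsWithin_iff]
      filter_upwards [hUo.mem_nhds ha] with z hz hza h
      exact hza (hinj n hz ha h)
    exact hev.frequently.filter_mono nhdsWithin_le_nhds

section RmtSteps
open Function Filter Metric Set Complex
open scoped Pointwise Topology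

theorem rmt_step_one {U : Set ℂ} (hUo : IsOpen U)
    (hUc : IsSimplyConnected U) (hU : U ≠ univ) :
    ∃ f : ℂ → ℂ, Injective f ∧ ¬Dense (f '' U) ∧ ∀ z ∈ U, deriv f z ≠ 0 := by
  wlog hU₀ : 0 ∉ U
  · rw [ne_univ_iff_exists_notMem] at hU
    rcases hU with ⟨a, ha⟩
    specialize this (hUo.vadd (-a)) (by simpa) (by simp [hU])
      (by simpa [mem_vadd_set_iff_neg_vadd_mem])
    rcases this with ⟨f, hf_inj, hf_dense, hdf⟩
    refine ⟨f ∘ (-a + ·), hf_inj.comp (add_right_injective (-a)), ?_, fun z hz ↦ ?_⟩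
    · simpa only [← image_vadd, Set.image_image] using! hf_dense
    · simpa [Function.comp_def, deriv_comp_const_add] using hdf (-a + z) (mapsTo_image _ _ hz)
  rcases exists_continuousOn_pow_eq hUc hUo continuousOn_id (by rwa [image_id]) two_ne_zero
    with ⟨f, hfc, hf_inv⟩
  replace hf_inv : LeftInverse (· ^ 2) f := hf_inv
  have hf₀ : ∀ z ∈ U, f z ≠ 0 := by
    intro z hz hfz
    simpa [hfz, (ne_of_mem_of_not_mem hz hU₀).symm] using hf_inv z
  have hdf : ∀ z ∈ U, HasStrictDerivAt f (2 * f z)⁻¹ z := by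
    intro z hz
    apply HasStrictDerivAt.of_local_left_inverse
    · exact hfc.continuousAt <| hUo.mem_nhds hz
    · simpa using hasStrictDerivAt_pow 2 (f z)
    · simpa using hf₀ z hz
    · exact .of_forall hf_inv
  refine ⟨f, hf_inv.injective, ?_, fun z hz ↦ ?_⟩
  · -- Take a point `x ∈ U`.
    simp only [Dense, not_forall, mem_closure_iff_frequently, not_frequently]
    rcases hUc.nonempty with ⟨x, hx⟩
    use -f x
    have : f '' U ∈ 𝓝 (f x) := by
      rw [← (hdf x hx).map_nhds_eq (by simpa using hf₀ x hx)]
      exact Filter.image_mem_map <| hUo.mem_nhds hx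
    rw [nhds_neg, eventually_neg]
    filter_upwards [this]
    rintro _ ⟨a, ha, rfl⟩ ⟨b, hb, hab⟩
    obtain rfl : a = b := by
      rw [← hf_inv b, hab]
      simp [hf_inv a]
    refine hf₀ a ha ?_
    linear_combination hab / 2
  · simpa [(hdf z hz).hasDerivAt.deriv] using hf₀ z hz

lemma rmt_step_two {U : Set ℂ} (hUo : IsOpen U)
    (hUc : IsSimplyConnected U) (hU : U ≠ univ) :
    ∃ f : ℂ → ℂ, MapsTo f U (ball 0 1) ∧ InjOn f U ∧ ∀ z ∈ U, deriv f z ≠ 0 := by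
  rcases rmt_step_one hUo hUc hU with ⟨f, hf_inj, hfd, hdf⟩
  obtain ⟨x, ε, hε₀, hε⟩ : ∃ (x : ℂ) (ε : ℝ), 0 < ε ∧ ∀ a ∈ U, ε < dist (f a) x := by
    simpa [Dense, mem_closure_iff_nhds_basis Metric.nhds_basis_closedBall] using hfd
  have hfx : ∀ z ∈ U, f z ≠ x := fun z hz ↦ by simpa using hε₀.trans (hε z hz)
  use fun z ↦ ε / (f z - x)
  refine ⟨?mapsTo, ?injOn, ?deriv⟩
  case mapsTo =>
    intro z hz
    rw [mem_ball_zero_iff, norm_div, norm_real, Real.norm_of_nonneg hε₀.le, div_lt_one₀]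
    · simpa [dist_eq_norm] using hε z hz
    · simpa [sub_eq_zero] using hfx z hz
  case injOn =>
    intro z hz w hw heq
    simpa [div_eq_mul_inv, hε₀.ne', hf_inj.eq_iff] using heq
  case deriv =>
    intro z hz
    have hdz : DifferentiableAt ℂ f z := differentiableAt_of_deriv_ne_zero (hdf z hz)
    rw [(hasDerivAt_const _ _).fun_div (hdz.hasDerivAt.sub_const _) _ |>.deriv] <;>
      simp [*, ne_of_gt, sub_eq_zero]

end RmtSteps

def RmtFam (U : Set ℂ) (p : ℂ) (f : ℂ → ℂ) : Prop :=
  DifferentiableOn ℂ f U ∧ MapsTo f U (ball 0 1) ∧ InjOn f U ∧ f p = 0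

lemma rmt_mob_comp {U : Set ℂ} (hUo : IsOpen U) {p : ℂ} (hp : p ∈ U) {f : ℂ → ℂ}
    (hf : DifferentiableOn ℂ f U) (hm : MapsTo f U (ball 0 1)) (hi : InjOn f U) :
    RmtFam U p (mob (f p) ∘ f) ∧ 
    deriv (mob (f p) ∘ f) p = deriv f p / (1 - (starRingEnd ℂ) (f p) * f p) := by
  have hfp : ‖f p‖ < 1 := mem_ball_zero_iff.1 (hm hp)
  refine ⟨⟨?_, ?_, ?_, ?_⟩, ?_⟩
  · intro z hz
    exact ((mob_hasDerivAt hfp (mem_ball_zero_iff.1 (hm hz))).differentiableAt).comp_differentiableWithinAt z (hf z hz)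
  · intro z hz
    exact mem_ball_zero_iff.2 (mob_norm_lt hfp (mem_ball_zero_iff.1 (hm hz)))
  · exact (mob_injOn hfp).comp hi hm
  · simp [mob]
  · have h1 := (hf.differentiableAt (hUo.mem_nhds hp)).hasDerivAt
    have h2 := (mob_hasDerivAt hfp hfp).comp p h1
    rw [h2.deriv]
    have := mob_den_ne hfp hfp
    field_simp

lemma rmt_extremal {U : Set ℂ} (hUo : IsOpen U) (hUc : IsSimplyConnected U) (hU : U ≠ univ)
    {p : ℂ} (hp : p ∈ U) : ∃ f, RmtFam U p f ∧ deriv f p ≠ 0 ∧ 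
      ∀ h, RmtFam U p h → ‖deriv h p‖ ≤ ‖deriv f p‖ := by
  have hpre : IsPreconnected U := hUc.isPathConnected.isConnected.isPreconnected
  obtain ⟨f₀, hm₀, hi₀, hd₀⟩ := rmt_step_two hUo hUc hU
  have hdf₀ : DifferentiableOn ℂ f₀ U := fun z hz =>
    (differentiableAt_of_deriv_ne_zero (hd₀ z hz)).differentiableWithinAt
  obtain ⟨hfam, hder⟩ := rmt_mob_comp hUo hp hdf₀ hm₀ hi₀
  have hder0 : deriv (mob (f₀ p) ∘ f₀) p ≠ 0 := by
    rw [hder]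
    have hfp : ‖f₀ p‖ < 1 := mem_ball_zero_iff.1 (hm₀ hp)
    exact div_ne_zero (hd₀ p hp) (mob_den_ne hfp hfp)
  set S : Set ℝ := {x | ∃ f, RmtFam U p f ∧ ‖deriv f p‖ = x} with hS
  have hSne : S.Nonempty := ⟨_, _, hfam, rfl⟩
  obtain ⟨R, hR, hRU⟩ := Metric.isOpen_iff.1 hUo p hp
  have hSbdd : BddAbove S := by
    refine ⟨1 / R, ?_⟩
    rintro x ⟨f, hf, rfl⟩
    refine Complex.norm_deriv_le_div_of_mapsTo_ball (hf.1.mono hRU) ?_ hR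
    rw [hf.2.2.2]
    exact fun z hz => ball_subset_closedBall (hf.2.1 (hRU hz))
  obtain ⟨u, -, hu, huS⟩ := exists_seq_tendsto_sSup hSne hSbdd
  choose F hF hFu using huS
  set l : Filter ℕ := (hyperfilter ℕ : Filter ℕ) with hl
  have hlle : l ≤ atTop := Nat.hyperfilter_le_atTop
  have hex : ∀ z, ∃ w, z ∈ U → Tendsto (fun n => F n z) l (𝓝 w) := by
    intro z
    by_cases hz : z ∈ U
    · obtain ⟨w, -, hw⟩ := (isCompact_closedBall (0:ℂ) 1).ultrafilter_le_nhds
        ((hyperfilter ℕ).map (fun n => F n z)) (by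
          rw [le_principal_iff]
          exact Filter.mem_map.2 (Filter.univ_mem'
            (fun n => ball_subset_closedBall ((hF n).2.1 hz))))
      exact ⟨w, fun _ => hw⟩
    · exact ⟨0, fun h => absurd h hz⟩
  choose f hf using hex
  have htl := rmt_tlu hUo F (fun n => (hF n).1) (fun n => (hF n).2.1) l f hf
  have hfd : DifferentiableOn ℂ f U := htl.differentiableOn (Eventually.of_forall fun n => (hF n).1) hUo
  have hdt := (htl.deriv (Eventually.of_forall fun n => (hF n).1) hUo).tendsto_at hp
  have hdn : ‖deriv f p‖ = sSup S := by
    refine tendsto_nhds_unique hdt.norm ?_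
    refine (hu.mono_left hlle).congr fun n => (hFu n).symm
  have hle : ∀ h, RmtFam U p h → ‖deriv h p‖ ≤ ‖deriv f p‖ := by
    intro h hh
    rw [hdn]
    exact le_csSup hSbdd ⟨h, hh, rfl⟩
  have hne : deriv f p ≠ 0 := by
    have := hle _ hfam
    rw [← norm_pos_iff] at hder0 ⊢
    linarith
  have han : AnalyticOnNhd ℂ f U := hfd.analyticOnNhd hUo
  have hnc : ∀ a ∈ U, ¬ ∀ᶠ z in 𝓝 a, f z = f a := by
    intro a ha h
    have := han.eqOn_of_preconnected_of_eventuallyEq (g := fun _ => f a) analyticOnNhd_const hpre ha h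
    apply hne
    have h2 : f =ᶠ[𝓝 p] fun _ => f a := by
      filter_upwards [hUo.mem_nhds hp] with z hz using this hz
    rw [h2.deriv_eq]
    simp
  have hne' : ∀ a ∈ U, ∀ᶠ z in 𝓝[≠] a, f z ≠ f a := by
    intro a ha
    exact ((han a ha).eventually_eq_or_eventually_ne analyticAt_const).resolve_left (hnc a ha)
  refine ⟨f, ⟨hfd, ?_, ?_, ?_⟩, hne, hle⟩
  · have hopen : IsOpen (f '' U) := by
      rcases han.is_constant_or_isOpen hpre with ⟨w, hw⟩ | h
      · exact absurd (by filter_upwards [hUo.mem_nhds hp] with z hz; rw [hw z hz, hw p hp]) (hnc p hp)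
      · exact h U subset_rfl hUo
    have hsub : f '' U ⊆ closedBall 0 1 := by
      rintro _ ⟨z, hz, rfl⟩
      exact isClosed_closedBall.mem_of_tendsto (hf z hz)
        (Eventually.of_forall fun n => ball_subset_closedBall ((hF n).2.1 hz))
    have := interior_maximal hsub hopen
    rw [interior_closedBall _ one_ne_zero] at this
    exact fun z hz => this ⟨z, hz, rfl⟩
  · intro a ha b hb hab
    by_contra hne2
    have hpos : 0 < dist a b := dist_pos.2 hne2
    have h1 := rmt_hurwitz_aux hUo F (fun n => (hF n).1) (fun n => (hF n).2.2.1) l f htl a ha (hne' a ha) (dist a b / 3) (by positivity)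
    have h2 := rmt_hurwitz_aux hUo F (fun n => (hF n).1) (fun n => (hF n).2.2.1) l f htl b hb (hne' b hb) (dist a b / 3) (by positivity)
    obtain ⟨n, ⟨x, hx, hxU, hx'⟩, ⟨y, hy, hyU, hy'⟩⟩ := (h1.and h2).exists
    have : x = y := (hF n).2.2.1 hxU hyU (by rw [hx', hy', hab])
    subst this
    rw [mem_closedBall] at hx hy
    have := dist_triangle_left a b x
    linarith
  · refine tendsto_nhds_unique (hf p hp) ?_
    refine tendsto_const_nhds.congr fun n => ((hF n).2.2.2).symm

lemma sqrt_diff {U : Set ℂ} (hUo : IsOpen U) {g s : ℂ → ℂ} (hg : DifferentiableOn ℂ g U)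
    (hs : ContinuousOn s U) (hsq : ∀ z, s z ^ 2 = g z) (h0 : ∀ z ∈ U, g z ≠ 0) {z : ℂ} (hz : z ∈ U) :
    HasDerivAt s (deriv g z / (2 * s z)) z := by
  have hsz : s z ≠ 0 := by
    intro h; apply h0 z hz; rw [← hsq, h]; simp
  have hg' := (hg.differentiableAt (hUo.mem_nhds hz)).hasDerivAt
  rw [hasDerivAt_iff_tendsto_slope] at hg' ⊢
  have hsc : Tendsto s (𝓝[≠] z) (𝓝 (s z)) :=
    (hs.continuousAt (hUo.mem_nhds hz)).tendsto.mono_left nhdsWithin_le_nhds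
  have h1 : Tendsto (fun w => s w + s z) (𝓝[≠] z) (𝓝 (2 * s z)) := by
    have := hsc.add_const (s z); rwa [← two_mul] at this
  have h2 := hg'.div h1 (by simpa using hsz)
  refine h2.congr' ?_
  have h3 : ∀ᶠ w in 𝓝[≠] z, s w + s z ≠ 0 := h1.eventually_ne (by simpa using hsz)
  filter_upwards [h3] with w hw
  simp only [Pi.div_apply, slope, vsub_eq_sub, smul_eq_mul]
  rw [← hsq, ← hsq, div_eq_iff hw]
  ring

theorem rmt {U : Set ℂ} (hUo : IsOpen U) (hUc : IsSimplyConnected U) (hU : U ≠ univ)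
    {p : ℂ} (hp : p ∈ U) : ∃ f : ℂ → ℂ, DifferentiableOn ℂ f U ∧ InjOn f U ∧ f '' U = ball 0 1 ∧ f p = 0 := by
  obtain ⟨f, ⟨hfd, hfm, hfi, hfp⟩, hne, hext⟩ := rmt_extremal hUo hUc hU hp
  refine ⟨f, hfd, hfi, subset_antisymm hfm.image_subset ?_, hfp⟩
  intro w hw
  by_contra hwn
  have hw1 : ‖w‖ < 1 := mem_ball_zero_iff.1 hw
  have hw0 : w ≠ 0 := by rintro rfl; exact hwn ⟨p, hp, hfp⟩
  set g := mob w ∘ f with hg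
  have hgd : DifferentiableOn ℂ g U := fun z hz =>
    ((mob_hasDerivAt hw1 (mem_ball_zero_iff.1 (hfm hz))).differentiableAt).comp_differentiableWithinAt z (hfd z hz)
  have hgm : MapsTo g U (ball 0 1) := fun z hz =>
    mem_ball_zero_iff.2 (mob_norm_lt hw1 (mem_ball_zero_iff.1 (hfm hz)))
  have hgi : InjOn g U := (mob_injOn hw1).comp hfi hfm
  have hg0 : ∀ z ∈ U, g z ≠ 0 := by
    intro z hz h
    have hd := mob_den_ne hw1 (mem_ball_zero_iff.1 (hfm hz))
    simp only [hg, Function.comp, mob, div_eq_zero_iff, hd, or_false, sub_eq_zero] at h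
    exact hwn ⟨z, hz, h⟩
  have hgder : deriv g p = deriv f p * (1 - (starRingEnd ℂ) w * w) := by
    have h1 := (hfd.differentiableAt (hUo.mem_nhds hp)).hasDerivAt
    have h2 := (mob_hasDerivAt hw1 (mem_ball_zero_iff.1 (hfm hp))).comp p h1
    rw [h2.deriv, hfp]; simp; ring
  obtain ⟨s, hsc, hsq⟩ := Complex.exists_continuousOn_pow_eq hUc hUo hgd.continuousOn
    (by rintro ⟨z, hz, h⟩; exact hg0 z hz h) (n := 2) two_ne_zero
  have hsd : ∀ z ∈ U, HasDerivAt s (deriv g z / (2 * s z)) z := fun z hz => sqrt_diff hUo hgd hsc hsq hg0 hz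
  have hsm : MapsTo s U (ball 0 1) := by
    intro z hz
    have h1 := mem_ball_zero_iff.1 (hgm hz)
    rw [← hsq, norm_pow] at h1
    rw [mem_ball_zero_iff]
    nlinarith [norm_nonneg (s z)]
  have hsi : InjOn s U := by
    intro a ha b hb h
    exact hgi ha hb (by rw [← hsq, ← hsq, h])
  obtain ⟨hfam, hder⟩ := rmt_mob_comp hUo hp (fun z hz => (hsd z hz).differentiableAt.differentiableWithinAt) hsm hsi
  have hle := hext _ hfam
  rw [hder, (hsd p hp).deriv, hgder] at hle
  set β := ‖s p‖ with hβ
  have hβ2 : β ^ 2 = ‖w‖ := by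
    rw [hβ, ← norm_pow, hsq, hg]; simp [mob, hfp]
  have hβ1 : β < 1 := mem_ball_zero_iff.1 (hsm hp)
  have hβ0 : 0 < β := by
    have := norm_pos_iff.2 hw0
    have h := norm_nonneg (s p)
    rcases h.eq_or_lt with h | h
    · rw [← hβ] at h; rw [← h] at hβ2; simp at hβ2; linarith
    · exact h
  have hn1 : ‖1 - (starRingEnd ℂ) w * w‖ = 1 - β^4 := by
    rw [Complex.conj_mul', ← hβ2]
    have : (1 - ((β^2 : ℝ) : ℂ)^2) = ((1 - β^4 : ℝ) : ℂ) := by push_cast; ring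
    rw [this, Complex.norm_real, Real.norm_of_nonneg]
    have : β^4 ≤ 1 := pow_le_one₀ hβ0.le hβ1.le
    linarith
  have hn2 : ‖1 - (starRingEnd ℂ) (s p) * s p‖ = 1 - β^2 := by
    rw [Complex.conj_mul', ← hβ]
    have : (1 - ((β : ℝ) : ℂ)^2) = ((1 - β^2 : ℝ) : ℂ) := by push_cast; ring
    rw [this, Complex.norm_real, Real.norm_of_nonneg]
    have : β^2 ≤ 1 := pow_le_one₀ hβ0.le hβ1.le
    linarith
  have hpos : 0 < 1 - β^2 := by nlinarith
  have hfpos := norm_pos_iff.2 hne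
  simp only [norm_div, norm_mul, hn1, hn2, ← hβ, Complex.norm_ofNat] at hle
  rw [div_div, div_le_iff₀ (by positivity)] at hle
  have h5 : (1 - β^4) ≤ 2 * β * (1 - β^2) := by
    by_contra hcon
    push Not at hcon
    have := mul_lt_mul_of_pos_left hcon hfpos
    linarith
  have h6 : (1 - β^2) * (1 - β)^2 ≤ 0 := by nlinarith
  have : 0 < (1 - β^2) * (1 - β)^2 := mul_pos hpos (by have : 0 < 1 - β := by linarith
                                                       positivity)
  linarith

theorem plane_homeo {U : Set ℂ} (hUo : IsOpen U) (hUc : IsSimplyConnected U)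
    {p : ℂ} (hp : p ∈ U) : ∃ φ : OpenPartialHomeomorph ℂ ℂ, φ.source = U ∧ φ.target = univ ∧ φ p = 0 := by
  by_cases hU : U = univ
  · refine ⟨(Homeomorph.addRight (-p)).toOpenPartialHomeomorph, ?_, ?_, ?_⟩ <;> simp [hU]
  obtain ⟨f, hfd, hfi, him, hfp⟩ := rmt hUo hUc hU hp
  have hopen : ∀ s ⊆ U, IsOpen s → IsOpen (f '' s) := by
    rcases (hfd.analyticOnNhd hUo).is_constant_or_isOpen hUc.isPathConnected.isConnected.isPreconnected with ⟨w, hw⟩ | h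
    · exfalso
      have h1 : (1/2 : ℂ) ∈ f '' U := by rw [him]; simp; norm_num
      obtain ⟨z, hz, h1⟩ := h1
      rw [hw z hz, ← hw p hp, hfp] at h1
      norm_num at h1
    · exact h
  let e : OpenPartialHomeomorph ℂ ℂ := OpenPartialHomeomorph.ofContinuousOpenRestrict
    (hfi.toPartialEquiv f U) hfd.continuousOn (by
      intro s hs
      have : (U.domRestrict f) '' s = f '' (Subtype.val '' s) := by rw [image_image]; rfl
      exact this ▸ hopen _ (by rintro _ ⟨x, _, rfl⟩; exact x.2) (hUo.isOpenMap_subtype_val s hs)) hUo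
  refine ⟨e.trans (OpenPartialHomeomorph.univUnitBall (E := ℂ)).symm, ?_, ?_, ?_⟩
  · rw [OpenPartialHomeomorph.trans_source]
    have : U ∩ f ⁻¹' (ball 0 1) = U := inter_eq_left.2 (by rw [← him]; exact subset_preimage_image f U)
    exact this
  · rw [OpenPartialHomeomorph.trans_target]
    have h1 : e.target = ball 0 1 := him
    rw [h1]
    ext z
    simp only [OpenPartialHomeomorph.symm_target, OpenPartialHomeomorph.symm_symm, mem_inter_iff, mem_preimage, mem_univ, iff_true]
    refine ⟨trivial, ?_⟩
    exact (OpenPartialHomeomorph.univUnitBall (E := ℂ)).map_source trivial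
  · have : e p = 0 := hfp
    simp [this]

lemma topL {E : Type*} [TopologicalSpace E] [PreconnectedSpace E] {q : E → ℂ} (hq : Continuous q)
    {δ : ℝ} (hδ : 0 < δ) (hcov : IsCoveringMapOn q {z | δ ≤ ‖z‖}) :
    IsPreconnected (q ⁻¹' closedBall 0 δ) := by
  classical
  set S : Set ℂ := {z | δ ≤ ‖z‖} with hS
  have cov := IsCoveringMapOn.isCoveringMap_restrictPreimage S hcov
  let H : C(unitInterval × (q ⁻¹' S), S) :=
    { toFun := fun x => ⟨((1 - (x.1 : ℝ) + x.1 * (δ / ‖q x.2‖) : ℝ) : ℂ) * q x.2, by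
        have h1 : δ ≤ ‖q x.2‖ := x.2.2
        have h2 : 0 < ‖q x.2‖ := lt_of_lt_of_le hδ h1
        have h3 := x.1.2.1
        have h4 := x.1.2.2
        have h5 : 0 ≤ 1 - (x.1 : ℝ) + x.1 * (δ / ‖q x.2‖) := by
          have : 0 ≤ (x.1 : ℝ) * (δ / ‖q x.2‖) := by positivity
          linarith
        change δ ≤ ‖((1 - (x.1 : ℝ) + x.1 * (δ / ‖q x.2‖) : ℝ) : ℂ) * q x.2‖
        rw [norm_mul, Complex.norm_real, Real.norm_of_nonneg h5, add_mul, mul_assoc, 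
          div_mul_cancel₀ _ h2.ne']
        nlinarith⟩
      continuous_toFun := by
        refine Continuous.subtype_mk ?_ _
        have hc : Continuous fun x : unitInterval × (q ⁻¹' S) => q x.2 :=
          hq.comp (continuous_subtype_val.comp continuous_snd)
        have ht : Continuous fun x : unitInterval × (q ⁻¹' S) => (x.1 : ℝ) :=
          continuous_subtype_val.comp continuous_fst
        refine (Complex.continuous_ofReal.comp ?_).mul hc
        refine (continuous_const.sub ht).add (ht.mul (continuous_const.div hc.norm ?_))
        intro x
        exact (lt_of_lt_of_le hδ x.2.2).ne' }
  have H0 : ∀ a, H (0, a) = S.restrictPreimage q ((ContinuousMap.id _ : C(q ⁻¹' S, q ⁻¹' S)) a) := by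
    intro a
    apply Subtype.ext
    simp [H]
  obtain ⟨Γ, hΓl, hΓ0⟩ : ∃ Γ : C(unitInterval × (q ⁻¹' S), q ⁻¹' S),
      (∀ x, S.restrictPreimage q (Γ x) = H x) ∧ ∀ a, Γ (0, a) = a :=
    ⟨cov.liftHomotopy H (ContinuousMap.id _) H0,
      congrFun (cov.liftHomotopy_lifts H (ContinuousMap.id _) H0),
      cov.liftHomotopy_zero H (ContinuousMap.id _) H0⟩
  have hHv : ∀ x, (H x : ℂ) = ((1 - (x.1 : ℝ) + x.1 * (δ / ‖q x.2‖) : ℝ) : ℂ) * q x.2 := fun x => rfl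
  have hΓ : ∀ a, q (Γ (1, a)).1 = ((δ / ‖q a‖ : ℝ) : ℂ) * q a := by
    intro a
    have := congrArg Subtype.val (hΓl (1, a))
    rw [hHv] at this
    simpa using this
  have hΓc : ∀ a : q ⁻¹' S, ‖q a‖ = δ → Γ (1, a) = a := by
    intro a ha
    have h0 : Γ (0, a) = a := hΓ0 a
    have h1 := cov.const_of_comp (A := unitInterval) (g := fun t => Γ (t, a))
      (Γ.continuous.comp (Continuous.prodMk_left a)) (by
        have key : ∀ t, S.restrictPreimage q (Γ (t, a)) = ⟨q a, a.2⟩ := by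
          intro t
          refine (hΓl (t, a)).trans (Subtype.ext ?_)
          rw [hHv]
          simp [ha, hδ.ne']
        intro t t'
        rw [key, key]) 1 0
    exact h1.trans h0
  let R : E → E := fun e => if h : e ∈ q ⁻¹' S then (Γ (1, ⟨e, h⟩)).1 else e
  have hR1 : ∀ e (h : e ∈ q ⁻¹' S), R e = (Γ (1, ⟨e, h⟩)).1 := fun e h => dif_pos h
  have hR2 : ∀ e, e ∉ q ⁻¹' S → R e = e := fun e h => dif_neg h
  have hRB : ∀ e ∈ q ⁻¹' closedBall 0 δ, R e = e := by
    intro e he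
    by_cases h : e ∈ q ⁻¹' S
    · rw [hR1 e h]
      have : ‖q e‖ = δ := le_antisymm (by simpa using he) h
      rw [hΓc ⟨e, h⟩ this]
    · exact hR2 e h
  have hRA : ContinuousOn R (q ⁻¹' S) := by
    rw [continuousOn_iff_continuous_domRestrict]
    have : (q ⁻¹' S).domRestrict R = fun a => (Γ (1, a)).1 := by
      ext a
      exact hR1 a.1 a.2
    rw [this]
    exact continuous_subtype_val.comp (Γ.continuous.comp (Continuous.prodMk_right 1))
  have hcl1 : IsClosed (q ⁻¹' S) := (isClosed_le continuous_const continuous_norm).preimage hq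
  have hcl2 : IsClosed (q ⁻¹' closedBall 0 δ) := isClosed_closedBall.preimage hq
  have hun : q ⁻¹' S ∪ q ⁻¹' closedBall 0 δ = univ := by
    ext e
    simpa [hS] using le_total δ ‖q e‖
  have hR : Continuous R := by
    rw [← continuousOn_univ, ← hun]
    exact hRA.union_of_isClosed (continuousOn_id.congr hRB) hcl1 hcl2
  have hrange : range R = q ⁻¹' closedBall 0 δ := by
    apply subset_antisymm
    · rintro _ ⟨e, rfl⟩
      by_cases h : e ∈ q ⁻¹' S
      · rw [hR1 e h, mem_preimage, hΓ]
        have : 0 < ‖q e‖ := lt_of_lt_of_le hδ h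
        rw [mem_closedBall_zero_iff, norm_mul, Complex.norm_real, Real.norm_of_nonneg (by positivity), 
          div_mul_cancel₀ _ this.ne']
      · rw [hR2 e h]
        simp only [hS, mem_preimage, mem_setOf_eq, not_le] at h
        simpa using h.le
    · intro e he
      exact ⟨e, hRB e he⟩
  rw [← hrange]
  exact isPreconnected_range hR

lemma topM {E : Type*} [TopologicalSpace E] {q : E → ℂ} (hq : Continuous q) (ho : IsOpenMap q)
    (hc : IsClosedMap q) {W D : Set ℂ} (hW : IsPreconnected W) (hDW : D ⊆ W) (hD : D.Nonempty)
    (hDp : IsPreconnected (q ⁻¹' D)) : IsPreconnected (q ⁻¹' W) := by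
  have ho' := ho.restrictPreimage W
  have hc' := hc.restrictPreimage W
  have hq' : Continuous (W.restrictPreimage q) := hq.restrictPreimage
  haveI : PreconnectedSpace W := isPreconnected_iff_preconnectedSpace.1 hW
  rw [isPreconnected_iff_preconnectedSpace, preconnectedSpace_iff_clopen]
  have key : ∀ P : Set (q ⁻¹' W), IsClopen P → P.Nonempty → ∃ x ∈ P, q x.1 ∈ D := by
    intro P hP hne
    have h1 : IsClopen (W.restrictPreimage q '' P) := ⟨hc' _ hP.1, ho' _ hP.2⟩
    rcases isClopen_iff.1 h1 with h | h
    · rw [image_eq_empty] at h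
      exact absurd h hne.ne_empty
    · obtain ⟨d, hd⟩ := hD
      have : (⟨d, hDW hd⟩ : W) ∈ W.restrictPreimage q '' P := h ▸ mem_univ _
      obtain ⟨x, hx, hxd⟩ := this
      refine ⟨x, hx, ?_⟩
      have := congrArg Subtype.val hxd
      simp at this
      rwa [this]
  have hDp' : IsPreconnected ((Subtype.val : q ⁻¹' W → E) ⁻¹' (q ⁻¹' D)) := by
    rw [← Topology.IsInducing.subtypeVal.isPreconnected_image, Subtype.image_preimage_coe,
      inter_eq_right.2 (preimage_mono hDW)]
    exact hDp
  intro P hP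
  by_contra hcon
  push Not at hcon
  obtain ⟨h1, h2⟩ := hcon
  obtain ⟨x, hx, hxD⟩ := key P hP h1
  obtain ⟨y, hy, hyD⟩ := key Pᶜ hP.compl (nonempty_compl.2 h2)
  exact hy (hDp'.subset_isClopen hP ⟨x, hxD, hx⟩ hyD)

noncomputable def radM (s a b r : ℝ) : ℝ :=
  if r ≤ a then b / a else if r ≤ s then (b + (r - a) * ((s - b) / (s - a))) / max r a else 1

lemma radM_cont {s a b : ℝ} (ha : 0 < a) (hb : 0 < b) (has : a < s) : Continuous (radM s a b) := by
  unfold radM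
  have h1 : Continuous fun r : ℝ => (b + (r - a) * ((s - b) / (s - a))) / max r a := by
    refine Continuous.div (by fun_prop) (by fun_prop) ?_
    intro r
    exact (lt_of_lt_of_le ha (le_max_right r a)).ne'
  refine Continuous.if_le continuous_const ?_ continuous_id continuous_const ?_
  · refine Continuous.if_le h1 continuous_const continuous_id continuous_const ?_
    rintro r rfl
    have : r - a ≠ 0 := by linarith
    have h2 : r ≠ 0 := by linarith
    rw [max_eq_left has.le]
    field_simp
    ring
  · rintro r rfl
    simp [has.le]

lemma radM_pos {s a b r : ℝ} (ha : 0 < a) (hb : 0 < b) (has : a < s) (hbs : b < s) :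
    0 < radM s a b r := by
  unfold radM
  split_ifs with h1 h2
  · positivity
  · have h3 : 0 < s - a := by linarith
    have h4 : 0 < s - b := by linarith
    have h5 : 0 < r - a := by linarith
    have : 0 < max r a := lt_of_lt_of_le ha (le_max_right r a)
    positivity
  · norm_num

lemma radM_inv {s a b r : ℝ} (ha : 0 < a) (hb : 0 < b) (has : a < s) (hbs : b < s) :
    radM s b a (radM s a b r * r) * radM s a b r = 1 := by
  have h3 : 0 < s - a := by linarith
  have h4 : 0 < s - b := by linarith
  by_cases h1 : r ≤ a
  · have : radM s a b r = b / a := by simp [radM, h1]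
    rw [this]
    have h2 : b / a * r ≤ b := by
      rw [div_mul_eq_mul_div, div_le_iff₀ ha]; nlinarith
    rw [radM, if_pos h2]
    field_simp
  · by_cases h2 : r ≤ s
    · have hr : 0 < r := by linarith
      have e1 : radM s a b r = (b + (r - a) * ((s - b) / (s - a))) / r := by
        rw [radM, if_neg h1, if_pos h2, max_eq_left (by linarith)]
      rw [e1, div_mul_cancel₀ _ hr.ne']
      have h5 : 0 < r - a := by linarith
      have h6 : 0 < (r - a) * ((s - b) / (s - a)) := by positivity
      have h7 : (r - a) * ((s - b) / (s - a)) ≤ s - b := by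
        rw [mul_div_assoc', div_le_iff₀ h3]; nlinarith
      rw [radM, if_neg (by linarith), if_pos (by linarith), max_eq_left (by linarith)]
      have h8 : b + (r - a) * ((s - b) / (s - a)) ≠ 0 := by positivity
      have h9 : a + (b + (r - a) * ((s - b) / (s - a)) - b) * ((s - a) / (s - b)) = r := by
        field_simp; ring
      rw [h9]
      field_simp
    · have e1 : radM s a b r = 1 := by rw [radM, if_neg h1, if_neg h2]
      rw [e1, one_mul, radM, if_neg (by linarith), if_neg h2, one_mul]

noncomputable def radC (s a b : ℝ) (z : ℂ) : ℂ := (radM s a b ‖z‖ : ℂ) * z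

lemma radC_cont {s a b : ℝ} (ha : 0 < a) (hb : 0 < b) (has : a < s) : Continuous (radC s a b) :=
  (Complex.continuous_ofReal.comp ((radM_cont ha hb has).comp continuous_norm)).mul continuous_id

lemma radC_inv {s a b : ℝ} (ha : 0 < a) (hb : 0 < b) (has : a < s) (hbs : b < s) (z : ℂ) :
    radC s b a (radC s a b z) = z := by
  have h : ‖radC s a b z‖ = radM s a b ‖z‖ * ‖z‖ := by
    rw [radC, norm_mul, Complex.norm_real, Real.norm_of_nonneg (radM_pos ha hb has hbs).le]
  rw [radC, h, radC, ← mul_assoc, ← Complex.ofReal_mul, radM_inv ha hb has hbs]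
  simp

lemma radC_id {s a b : ℝ} (has : a < s) {z : ℂ} (hz : s < ‖z‖) :
    radC s a b z = z := by
  rw [radC, radM, if_neg (by linarith), if_neg (by linarith)]; simp

lemma radC_small {s a b : ℝ} (ha : 0 < a) (hb : 0 < b) {z : ℂ} (hz : ‖z‖ ≤ a) :
    ‖radC s a b z‖ ≤ b := by
  rw [radC, radM, if_pos hz, norm_mul, Complex.norm_real, Real.norm_of_nonneg (by positivity),
    div_mul_eq_mul_div, div_le_iff₀ ha]
  nlinarith

open Classical in
noncomputable def extF (θ : OpenPartialHomeomorph ℂ ℂ) (c : ℂ → ℂ) (z : ℂ) : ℂ :=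
  if z ∈ θ.source then θ.symm (c (θ z)) else z

lemma extF_cont {θ : OpenPartialHomeomorph ℂ ℂ} (hθ : θ.target = univ) {c : ℂ → ℂ} (hc : Continuous c)
    {s : ℝ} (hs : ∀ z, s < ‖z‖ → c z = z) : Continuous (extF θ c) := by
  rw [continuous_iff_continuousAt]
  intro z
  have hsymm : Continuous θ.symm := by
    rw [← continuousOn_univ, ← hθ]; exact θ.continuousOn_symm
  by_cases hz : z ∈ θ.source
  · have h1 : ContinuousAt (fun z => θ.symm (c (θ z))) z :=
      hsymm.continuousAt.comp (hc.continuousAt.comp (θ.continuousAt hz))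
    refine h1.congr ?_
    filter_upwards [θ.open_source.mem_nhds hz] with w hw
    simp [extF, hw]
  · have hQ : IsClosed (θ.symm '' closedBall 0 s) :=
      ((isCompact_closedBall 0 s).image hsymm).isClosed
    have hzQ : z ∉ θ.symm '' closedBall 0 s := by
      rintro ⟨w, -, rfl⟩
      exact hz (θ.map_target (by simp [hθ]))
    refine continuousAt_id.congr ?_
    filter_upwards [hQ.isOpen_compl.mem_nhds hzQ] with w hw
    by_cases hw' : w ∈ θ.source
    · have : s < ‖θ w‖ := by
        by_contra hcon
        exact hw ⟨θ w, by simpa using hcon, θ.left_inv hw'⟩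
      simp [extF, hw', hs _ this]
    · simp [extF, hw']

lemma extF_inv {θ : OpenPartialHomeomorph ℂ ℂ} (hθ : θ.target = univ) {c c' : ℂ → ℂ}
    (h : ∀ z, c' (c z) = z) (z : ℂ) : extF θ c' (extF θ c z) = z := by
  by_cases hz : z ∈ θ.source
  · have h1 : extF θ c z = θ.symm (c (θ z)) := by simp [extF, hz]
    have h2 : θ.symm (c (θ z)) ∈ θ.source := θ.map_target (by simp [hθ])
    rw [h1, extF, if_pos h2, θ.right_inv (by simp [hθ]), h, θ.left_inv hz]
  · simp [extF, hz]

lemma compress {θ : OpenPartialHomeomorph ℂ ℂ} (hθ : θ.target = univ) (h0 : (0:ℂ) ∈ θ.source)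
    (h00 : θ 0 = 0) {K : Set ℂ} (hK : IsCompact K) (hKs : K ⊆ θ.source) :
    ∃ T : ℂ ≃ₜ ℂ, ∃ δ : ℝ, 0 < δ ∧ (∀ z ∈ K, T z ∈ ball (0:ℂ) δ) ∧
      ∀ z, T z ∈ closedBall (0:ℂ) δ → z ∈ θ.source := by
  have hsymm : Continuous θ.symm := by
    rw [← continuousOn_univ, ← hθ]; exact θ.continuousOn_symm
  obtain ⟨δ, hδ, hδs⟩ := Metric.nhds_basis_closedBall.mem_iff.1 (θ.open_source.mem_nhds h0)
  have hs0 : θ.symm 0 = 0 := by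
    have := θ.left_inv h0
    rwa [h00] at this
  obtain ⟨b₀, hb₀, hbs⟩ := Metric.nhds_basis_closedBall.mem_iff.1
    (hsymm.continuousAt.preimage_mem_nhds (x := 0) (by rw [hs0]; exact ball_mem_nhds (0:ℂ) hδ))
  obtain ⟨a₀, ha₀⟩ := (hK.image_of_continuousOn (θ.continuousOn.mono hKs)).isBounded.exists_norm_le
  set a := max a₀ 1 with ha
  have hapos : 0 < a := by positivity
  set b := min b₀ a with hb
  have hbpos : 0 < b := by positivity
  have has : a < a + 1 := by linarith
  have hbs' : b < a + 1 := by have := min_le_right b₀ a; linarith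
  let T : ℂ ≃ₜ ℂ :=
    { toFun := extF θ (radC (a+1) a b)
      invFun := extF θ (radC (a+1) b a)
      left_inv := extF_inv hθ (radC_inv hapos hbpos has hbs')
      right_inv := extF_inv hθ (radC_inv hbpos hapos hbs' has)
      continuous_toFun := extF_cont hθ (radC_cont hapos hbpos has) (fun z hz => radC_id has hz)
      continuous_invFun := extF_cont hθ (radC_cont hbpos hapos hbs') (fun z hz => radC_id hbs' hz) }
  have hT : ∀ z, T z = extF θ (radC (a+1) a b) z := fun z => rfl
  refine ⟨T, δ, hδ, ?_, ?_⟩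
  · intro z hz
    rw [hT, extF, if_pos (hKs hz)]
    apply hbs
    rw [mem_closedBall_zero_iff]
    refine (radC_small hapos hbpos ?_).trans (min_le_left _ _)
    exact (ha₀ _ ⟨z, hz, rfl⟩).trans (le_max_left _ _)
  · intro z hz
    by_contra hcon
    rw [hT, extF, if_neg hcon] at hz
    exact hcon (hδs hz)

lemma compress2 {U V : Set ℂ} (hUo : IsOpen U) (hVo : IsOpen V) (hU : IsSimplyConnected U)
    (hV : IsSimplyConnected V) (hUV : U ⊆ V) {K : Set ℂ} (hK : IsCompact K) (hKU : K ⊆ U) :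
    ∃ Φ : OpenPartialHomeomorph ℂ ℂ, Φ.source = V ∧ Φ.target = univ ∧ ∃ δ : ℝ, 0 < δ ∧ 
      (∀ z ∈ K, Φ z ∈ ball (0:ℂ) δ) ∧ ∀ z ∈ V, Φ z ∈ closedBall (0:ℂ) δ → z ∈ U := by
  obtain ⟨p, hp⟩ := hU.nonempty
  obtain ⟨φ, hφs, hφt, hφp⟩ := plane_homeo hVo hV (hUV hp)
  obtain ⟨ψ, hψs, hψt, hψp⟩ := plane_homeo hUo hU hp
  set θ := φ.symm.trans ψ with hθ
  have hmem : ∀ z, z ∈ θ.source ↔ φ.symm z ∈ U := by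
    intro z
    rw [hθ, OpenPartialHomeomorph.trans_source]
    simp [hφt, hψs]
  have hθt : θ.target = univ := by
    ext z
    rw [hθ, OpenPartialHomeomorph.trans_target]
    simp only [hψt, OpenPartialHomeomorph.symm_target, hφs, univ_inter, mem_preimage, mem_univ, iff_true]
    apply hUV
    rw [← hψs]
    exact ψ.map_target (by simp [hψt])
  have hs0 : φ.symm 0 = p := by
    rw [← hφp]; exact φ.left_inv (by rw [hφs]; exact hUV hp)
  obtain ⟨T, δ, hδ, h1, h2⟩ := compress (θ := θ) hθt (by rw [hmem, hs0]; exact hp)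
    (by simp [hθ, hs0, hψp]) (K := φ '' K)
    (hK.image_of_continuousOn (φ.continuousOn.mono (by rw [hφs]; exact hKU.trans hUV)))
    (by
      rintro _ ⟨z, hz, rfl⟩
      rw [hmem, φ.left_inv (by rw [hφs]; exact hUV (hKU hz))]
      exact hKU hz)
  refine ⟨φ.trans T.toOpenPartialHomeomorph, by simp [hφs], by simp [hφt], δ, hδ, ?_, ?_⟩
  · intro z hz
    exact h1 _ ⟨z, hz, rfl⟩
  · intro z hz hz'
    have := h2 (φ z) hz'
    rwa [hmem, φ.left_inv (by rw [hφs]; exact hz)] at this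

lemma coreStep {U V X K : Set ℂ} {f : ℂ → ℂ} {Φ : OpenPartialHomeomorph ℂ ℂ} {δ : ℝ} (hδ : 0 < δ)
    (hΦs : Φ.source = V) (hΦt : Φ.target = univ) (hΦK : ∀ z ∈ K, Φ z ∈ ball (0:ℂ) δ)
    (hΦU : ∀ z ∈ V, Φ z ∈ closedBall (0:ℂ) δ → z ∈ U)
    (hUV : U ⊆ V) (hUp : IsPreconnected U)
    (hXo : IsOpen X) (hXp : IsPreconnected X) (hfd : DifferentiableOn ℂ f X) (hfm : MapsTo f X V)
    (hprop : ∀ C : Set ℂ, IsCompact C → C ⊆ V → IsCompact (X ∩ f ⁻¹' C))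
    (hfin : ∀ w ∈ V, (X ∩ f ⁻¹' {w}).Finite)
    (hder : ∀ z ∈ X, f z ∉ K → deriv f z ≠ 0) :
    IsPreconnected (X ∩ f ⁻¹' (V ∩ Φ ⁻¹' closedBall 0 δ)) ∧ IsPreconnected (X ∩ f ⁻¹' U) := by
  let q : X → ℂ := fun x => Φ (f x)
  have hsymm : Continuous Φ.symm := by
    rw [← continuousOn_univ, ← hΦt]; exact Φ.continuousOn_symm
  have hsV : ∀ z, Φ.symm z ∈ V := fun z => hΦs ▸ Φ.map_target (by simp [hΦt])
  have hri : ∀ z, Φ (Φ.symm z) = z := fun z => Φ.right_inv (by simp [hΦt])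
  have hli : ∀ z ∈ V, Φ.symm (Φ z) = z := fun z hz => Φ.left_inv (hΦs ▸ hz)
  have hΦc : ContinuousOn Φ V := hΦs ▸ Φ.continuousOn
  have hfr : Continuous fun x : X => f x := hfd.continuousOn.comp_continuous continuous_subtype_val (fun x => x.2)
  have hq : Continuous q := hΦc.comp_continuous hfr (fun x => hfm x.2)
  have hqp : IsProperMap q := by
    rw [isProperMap_iff_isCompact_preimage]
    refine ⟨hq, fun C hC => ?_⟩
    rw [Subtype.isCompact_iff]
    have : (Subtype.val '' (q ⁻¹' C)) = X ∩ f ⁻¹' (Φ.symm '' C) := by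
      ext z
      constructor
      · rintro ⟨x, hx, rfl⟩
        exact ⟨x.2, Φ (f x), hx, hli _ (hfm x.2)⟩
      · rintro ⟨hz, w, hw, hwz⟩
        refine ⟨⟨z, hz⟩, ?_, rfl⟩
        change Φ (f z) ∈ C
        rw [← hwz, hri]; exact hw
    rw [this]
    apply hprop _ (hC.image hsymm)
    rintro _ ⟨w, -, rfl⟩
    exact hsV w
  have hqc : IsClosedMap q := hqp.isClosedMap
  have han : AnalyticOnNhd ℂ f X := hfd.analyticOnNhd hXo
  have hqo : IsOpenMap q := by
    intro s hs
    have h1 : IsOpen (f '' (Subtype.val '' s)) := by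
      rcases han.is_constant_or_isOpen hXp with ⟨w, hw⟩ | h
      · by_cases hne : X.Nonempty
        · exfalso
          obtain ⟨x, hx⟩ := hne
          have hwV : w ∈ V := hw x hx ▸ hfm hx
          have : X ⊆ X ∩ f ⁻¹' {w} := fun z hz => ⟨hz, hw z hz⟩
          have hXf : X.Finite := (hfin w hwV).subset this
          exact (infinite_of_mem_nhds x (hXo.mem_nhds hx)) hXf
        · have : s = ∅ := by
            ext x; exact (hne ⟨x.1, x.2⟩).elim
          simp [this]
      · exact h _ (by rintro _ ⟨x, _, rfl⟩; exact x.2) (hXo.isOpenMap_subtype_val s hs)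
    have h2 := Φ.isOpen_image_of_subset_source h1 (by
      rintro _ ⟨_, ⟨x, _, rfl⟩, rfl⟩; rw [hΦs]; exact hfm x.2)
    rwa [image_image, image_image] at h2
  have hcov : IsCoveringMapOn q {z | δ ≤ ‖z‖} := by
    apply hqc.isCoveringMapOn_of_isLocalHomeomorphOn
    · intro w _
      refine Set.Finite.of_finite_image (f := Subtype.val) ((hfin (Φ.symm w) (hsV w)).subset ?_)
        Subtype.val_injective.injOn
      rintro _ ⟨x, hx, rfl⟩
      refine ⟨x.2, ?_⟩
      have : Φ (f x) = w := hx
      rw [mem_preimage, mem_singleton_iff, ← this, hli _ (hfm x.2)]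
    · apply IsLocalHomeomorphOn.mk
      intro x hx
      have hnK : f x ∉ K := by
        intro h
        have h1 := mem_ball_zero_iff.1 (hΦK _ h)
        have h2 : δ ≤ ‖Φ (f x)‖ := hx
        linarith
      have hs : HasStrictDerivAt f (deriv f x) x := (han x x.2).hasStrictDerivAt
      let e1 : OpenPartialHomeomorph X ℂ :=
        haveI : Nonempty X := ⟨x⟩
        hXo.isOpenEmbedding_subtypeVal.toOpenPartialHomeomorph Subtype.val
      let e2 : OpenPartialHomeomorph ℂ ℂ :=
        (hs.hasStrictFDerivAt_equiv (hder x x.2 hnK)).toOpenPartialHomeomorph f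
      have he2 : x.1 ∈ e2.source := HasStrictFDerivAt.mem_toOpenPartialHomeomorph_source _
      refine ⟨(e1.trans e2).trans Φ, ?_, ?_⟩
      · simp only [OpenPartialHomeomorph.trans_source, mem_inter_iff, mem_preimage]
        refine ⟨⟨trivial, he2⟩, ?_⟩
        rw [hΦs]
        exact hfm x.2
      · intro y _
        rfl
  haveI : PreconnectedSpace X := isPreconnected_iff_preconnectedSpace.1 hXp
  have hL := topL hq hδ hcov
  have hD : closedBall (0:ℂ) δ ⊆ Φ '' U := by
    intro z hz
    exact ⟨Φ.symm z, hΦU _ (hsV z) (by rwa [hri]), hri z⟩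
  have hM := topM hq hqo hqc (hUp.image Φ (hΦc.mono hUV)) hD ⟨0, by simp [hδ.le]⟩ hL
  constructor
  · convert! hL.image Subtype.val continuous_subtype_val.continuousOn using 1
    ext z
    constructor
    · rintro ⟨h1, h2, h3⟩
      exact ⟨⟨z, h1⟩, h3, rfl⟩
    · rintro ⟨x, hx, rfl⟩
      exact ⟨x.2, hfm x.2, hx⟩
  · convert! hM.image Subtype.val continuous_subtype_val.continuousOn using 1
    ext z
    constructor
    · rintro ⟨h1, h2⟩
      exact ⟨⟨z, h1⟩, ⟨f z, h2, rfl⟩, rfl⟩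
    · rintro ⟨x, ⟨w, hw, hwx⟩, rfl⟩
      refine ⟨x.2, ?_⟩
      have : w = f x := by
        rw [← hli w (hUV hw), hwx, hli _ (hfm x.2)]
      rw [mem_preimage, ← this]
      exact hw

lemma nested_preconnected {L : ℕ → Set ℂ} (hc : ∀ n, IsCompact (L n)) (hp : ∀ n, IsPreconnected (L n))
    (hanti : ∀ n, L (n+1) ⊆ L n) : IsPreconnected (⋂ n, L n) := by
  have hcl : IsClosed (⋂ n, L n) := isClosed_iInter fun n => (hc n).isClosed
  have hcc : IsCompact (⋂ n, L n) := (hc 0).of_isClosed_subset hcl (iInter_subset _ 0)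
  have hant : Antitone L := antitone_nat_of_succ_le hanti
  rw [isPreconnected_iff_subset_of_disjoint_closed]
  intro u v hu hv huv hdis
  have hdisj : Disjoint ((⋂ n, L n) ∩ u) ((⋂ n, L n) ∩ v) := by
    rw [Set.disjoint_iff_inter_eq_empty, ← inter_inter_distrib_left]; exact hdis
  obtain ⟨u', v', hu'o, hv'o, huu, hvv, hd⟩ := SeparatedNhds.of_isCompact_isCompact (hcc.inter_right hu)
    (hcc.inter_right hv) hdisj
  obtain ⟨n, hn⟩ : ∃ n, L n ⊆ u' ∪ v' := by
    by_contra hcon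
    push Not at hcon
    have := IsCompact.nonempty_iInter_of_sequence_nonempty_isCompact_isClosed (fun n => L n \ (u' ∪ v'))
      (fun n => sdiff_subset_sdiff_left (hanti n)) (fun n => sdiff_nonempty.2 (hcon n))
      ((hc 0).diff (hu'o.union hv'o)) (fun n => ((hc n).diff (hu'o.union hv'o)).isClosed)
    obtain ⟨x, hx⟩ := this
    rw [mem_iInter] at hx
    have hxL : x ∈ ⋂ n, L n := mem_iInter.2 fun n => (hx n).1
    rcases huv hxL with h | h
    · exact (hx 0).2 (Or.inl (huu ⟨hxL, h⟩))
    · exact (hx 0).2 (Or.inr (hvv ⟨hxL, h⟩))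
  rcases (hp n).subset_or_subset hu'o hv'o hd hn with h | h
  · left
    intro x hx
    rcases huv hx with h' | h'
    · exact h'
    · exact (disjoint_left.1 hd (h (mem_iInter.1 hx n)) (hvv ⟨hx, h'⟩)).elim
  · right
    intro x hx
    rcases huv hx with h' | h'
    · exact (disjoint_left.1 hd (huu ⟨hx, h'⟩) (h (mem_iInter.1 hx n))).elim
    · exact h'

def plX (g : ℂ → ℂ) (U : Set ℂ) (n : ℕ) : Set ℂ := {z | ∀ k ≤ n, g^[k] z ∈ U}

lemma plX_succ (g : ℂ → ℂ) (U : Set ℂ) (n : ℕ) :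
    plX g U (n+1) = plX g U n ∩ g^[n+1] ⁻¹' U := by
  ext z
  constructor
  · intro h
    exact ⟨fun k hk => h k (by omega), h (n+1) le_rfl⟩
  · rintro ⟨h1, h2⟩ k hk
    rcases Nat.lt_or_ge n k with h | h
    · obtain rfl : k = n + 1 := by omega
      exact h2
    · exact h1 k h

structure PlGood (g : ℂ → ℂ) (U V : Set ℂ) (n : ℕ) : Prop where
  op : IsOpen (plX g U n)
  con : IsPreconnected (plX g U n)
  diff : DifferentiableOn ℂ g^[n+1] (plX g U n)
  maps : MapsTo g^[n+1] (plX g U n) V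
  prop : ∀ C : Set ℂ, IsCompact C → C ⊆ V → IsCompact (plX g U n ∩ g^[n+1] ⁻¹' C)
  fin : ∀ w ∈ V, (plX g U n ∩ g^[n+1] ⁻¹' {w}).Finite
  surj : ∀ w ∈ V, ∃ z ∈ plX g U n, g^[n+1] z = w
  crit : ∀ z ∈ plX g U n, deriv g^[n+1] z = 0 → ∀ m, g^[m] z ∈ U

lemma plAll {g : ℂ → ℂ} {U : Set ℂ} {n : ℕ} {z : ℂ} (h1 : z ∈ plX g U n)
    (h2 : ∀ m, g^[m] (g^[n+1] z) ∈ U) (m : ℕ) : g^[m] z ∈ U := by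
  rcases Nat.lt_or_ge n m with h | h
  · obtain ⟨k, rfl⟩ : ∃ k, m = k + (n + 1) := ⟨m - (n+1), by omega⟩
    rw [Function.iterate_add_apply]
    exact h2 k
  · exact h1 m h

/-- A polynomial-like map `g : U → V` of degree `d ≥ 2` whose filled Julia set
contains all of its critical points has connected filled Julia set. -/
theorem polyLike_filledJulia_connected (g : ℂ → ℂ) (U V : Set ℂ)
    (hUo : IsOpen U) (hVo : IsOpen V)
    (hUsimply : SimplyConnectedSpace U) (hVsimply : SimplyConnectedSpace V)
    (hUV : closure U ⊆ V) (hUcpt : IsCompact (closure U))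
    (hhol : DifferentiableOn ℂ g U) (hmaps : Set.MapsTo g U V)
    (hproper : ∀ C : Set ℂ, IsCompact C → C ⊆ V → IsCompact (U ∩ g ⁻¹' C))
    (d : ℕ) (hd : 2 ≤ d)
    (hdeg : ∀ w ∈ V, 1 ≤ (U ∩ g ⁻¹' {w}).ncard ∧ (U ∩ g ⁻¹' {w}).ncard ≤ d)
    (hcrit : {z ∈ U | deriv g z = 0} ⊆ polyLikeFilledJulia g U) :
    IsConnected (polyLikeFilledJulia g U) := by
  have hU : IsSimplyConnected U := hUsimply
  have hV : IsSimplyConnected V := hVsimply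
  have hUp : IsPreconnected U := hU.isPathConnected.isConnected.isPreconnected
  have hUV' : U ⊆ V := subset_closure.trans hUV
  set K : Set ℂ := U ∩ g ⁻¹' closure U with hK
  have hKc : IsCompact K := hproper _ hUcpt hUV
  obtain ⟨Φ, hΦs, hΦt, δ, hδ, hΦK, hΦU⟩ := compress2 hUo hVo hU hV hUV' hKc inter_subset_left
  have hJK : ∀ z, (∀ m, g^[m] z ∈ U) → z ∈ K := fun z hz =>
    ⟨hz 0, subset_closure (hz 1)⟩
  have hfin0 : ∀ w ∈ V, (U ∩ g ⁻¹' {w}).Finite := fun w hw =>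
    Set.finite_of_ncard_pos (by have := (hdeg w hw).1; omega)
  have hsurj0 : ∀ w ∈ V, ∃ z ∈ U, g z = w := by
    intro w hw
    have h : 0 < (U ∩ g ⁻¹' {w}).ncard := (hdeg w hw).1
    obtain ⟨z, hz, hzw⟩ := Set.nonempty_of_ncard_ne_zero h.ne'
    exact ⟨z, hz, hzw⟩
  have hcore : ∀ n, PlGood g U V n → 
      IsPreconnected (plX g U n ∩ g^[n+1] ⁻¹' (V ∩ Φ ⁻¹' closedBall 0 δ)) ∧
      IsPreconnected (plX g U n ∩ g^[n+1] ⁻¹' U) := by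
    intro n hn
    refine coreStep hδ hΦs hΦt hΦK hΦU hUV' hUp hn.op hn.con hn.diff hn.maps hn.prop hn.fin ?_
    intro z hz hzK hd
    apply hzK
    apply hJK
    intro m
    rw [← Function.iterate_add_apply]
    exact hn.crit z hz hd _
  have hgood : ∀ n, PlGood g U V n := by
    intro n
    induction n with
    | zero =>
      have h0 : plX g U 0 = U := by
        ext z
        simp [plX]
      have h1 : g^[0+1] = g := by simp
      constructor
      · rwa [h0]
      · rwa [h0]
      · rwa [h0, h1]
      · rwa [h0, h1]
      · rwa [h0, h1]
      · rwa [h0, h1]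
      · rwa [h0, h1]
      · rw [h0, h1]
        intro z hz hd
        exact hcrit ⟨hz, hd⟩
    | succ n ih =>
      have hX := plX_succ g U n
      have hit : g^[n+1+1] = g ∘ g^[n+1] := Function.iterate_succ' g (n+1)
      have hpre : ∀ C, plX g U (n+1) ∩ g^[n+1+1] ⁻¹' C = plX g U n ∩ g^[n+1] ⁻¹' (U ∩ g ⁻¹' C) := by
        intro C
        rw [hX, hit, preimage_comp, inter_assoc, preimage_inter]
      constructor
      · rw [hX]
        exact ih.diff.continuousOn.isOpen_inter_preimage ih.op hUo
      · rw [hX]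
        exact (hcore n ih).2
      · rw [hX, hit]
        exact hhol.comp (ih.diff.mono inter_subset_left) (fun z hz => hz.2)
      · rw [hX, hit]
        exact fun z hz => hmaps hz.2
      · intro C hC hCV
        rw [hpre]
        exact ih.prop _ (hproper C hC hCV) (inter_subset_left.trans hUV')
      · intro w hw
        rw [hpre]
        have h1 := (hfin0 w hw).biUnion (t := fun y => plX g U n ∩ g^[n+1] ⁻¹' {y})
          (fun y hy => ih.fin y (hUV' hy.1))
        refine h1.subset ?_
        rintro z ⟨hz, hz'⟩
        exact mem_biUnion hz' ⟨hz, rfl⟩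
      · intro w hw
        obtain ⟨y, hy, hyw⟩ := hsurj0 w hw
        obtain ⟨z, hz, hzy⟩ := ih.surj y (hUV' hy)
        refine ⟨z, ?_, ?_⟩
        · rw [hX]
          exact ⟨hz, by rw [mem_preimage, hzy]; exact hy⟩
        · rw [hit, Function.comp_apply, hzy, hyw]
      · intro z hz hd
        rw [hX] at hz
        have hd1 := ih.diff.differentiableAt (ih.op.mem_nhds hz.1)
        have hd2 := hhol.differentiableAt (hUo.mem_nhds hz.2)
        rw [hit, deriv_comp z hd2 hd1, mul_eq_zero] at hd
        rcases hd with hd | hd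
        · exact plAll hz.1 (hcrit ⟨hz.2, hd⟩)
        · exact ih.crit z hz.1 hd
  set B : Set ℂ := V ∩ Φ ⁻¹' closedBall 0 δ with hB
  have hsymm : Continuous Φ.symm := by
    rw [← continuousOn_univ, ← hΦt]; exact Φ.continuousOn_symm
  have hsV : ∀ z, Φ.symm z ∈ V := fun z => hΦs ▸ Φ.map_target (by simp [hΦt])
  have hBe : B = Φ.symm '' closedBall 0 δ := by
    ext z
    constructor
    · rintro ⟨h1, h2⟩
      exact ⟨Φ z, h2, Φ.left_inv (hΦs ▸ h1)⟩
    · rintro ⟨w, hw, rfl⟩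
      exact ⟨hsV w, by rw [mem_preimage, Φ.right_inv (by simp [hΦt])]; exact hw⟩
  have hBc : IsCompact B := hBe ▸ (isCompact_closedBall 0 δ).image hsymm
  have hKB : K ⊆ B := fun z hz => ⟨hUV' hz.1, ball_subset_closedBall (hΦK z hz)⟩
  have hBU : B ⊆ U := fun z hz => hΦU z hz.1 hz.2
  have hBne : B.Nonempty := by
    rw [hBe]
    exact ⟨_, 0, by simp [hδ.le], rfl⟩
  let L : ℕ → Set ℂ := fun n => plX g U n ∩ g^[n+1] ⁻¹' B
  have hLc : ∀ n, IsCompact (L n) := fun n => (hgood n).prop B hBc inter_subset_left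
  have hLp : ∀ n, IsPreconnected (L n) := fun n => (hcore n (hgood n)).1
  have hLa : ∀ n, L (n+1) ⊆ L n := by
    rintro n z ⟨h1, h2⟩
    rw [plX_succ] at h1
    refine ⟨h1.1, hKB ⟨h1.2, subset_closure ?_⟩⟩
    have := hBU h2
    rwa [Function.iterate_succ_apply'] at this
  have hLn : ∀ n, (L n).Nonempty := by
    intro n
    obtain ⟨b, hb⟩ := hBne
    obtain ⟨z, hz, hzb⟩ := (hgood n).surj b hb.1
    exact ⟨z, hz, by rw [mem_preimage, hzb]; exact hb⟩
  have hJ : polyLikeFilledJulia g U = ⋂ n, L n := by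
    ext z
    rw [mem_iInter]
    constructor
    · intro hz n
      refine ⟨fun k _ => hz k, hKB (hJK _ fun m => ?_)⟩
      rw [← Function.iterate_add_apply]
      exact hz _
    · intro hz m
      exact (hz m).1 m le_rfl
  rw [hJ]
  exact ⟨IsCompact.nonempty_iInter_of_sequence_nonempty_isCompact_isClosed L hLa hLn (hLc 0)
    (fun n => (hLc n).isClosed), nested_preconnected hLc hLp hLa⟩
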